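/- arXiv:1510.02194 — 11 statements merged into one kernel-verified Lean document; each statement's English description precedes it below -/
import Mathlib

section
/- Let v>0, β ≠ 0, B₂, B₃ ∈ ℝ, γ>1. Then A r_i = λ_i r_i for each i=1,…,6, where λ₁=−√α₊, λ₂=−β/√v, λ₃=−√α_−, λ₄=√α_−, λ₅=β/√v, λ₆=√α₊, and r₁ = ((v/α₊)(α₊−β²/v), −B₂, −B₃, (v/√α₊)(α₊−β²/v), −βB₂/√α₊, −βB₃/√α₊), r₂ = (0, βB₃, −βB₂, 0, β√v·B₃, −β√v·B₂), r₃ = ((v/α_−)(β²/v−α_−), B₂, B₃, (v/√α_−)(β²/v−α_−), βB₂/√α_−, βB₃/√α_−), r₄ = (−(v/α_−)(β²/v−α_−), −B₂, −B₃, (v/√α_−)(β²/v−α_−), βB₂/√α_−, βB₃/√α_−), r₅ = (0, βB₃, −βB₂, 0, −β√v·B₃, β√v·B₂), r₆ = (−(v/α₊)(α₊−β²/v), B₂, B₃, (v/√α₊)(α₊−β²/v), −βB₂/√α₊, −βB₃/√α₊). -/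
/-- For `v > 0`, `β ≠ 0`, `γ > 1`, the six vectors `r₁,…,r₆` are eigenvectors of the
planar isentropic MHD coefficient matrix `A` with eigenvalues
`λ₁ = −√α₊, λ₂ = −β/√v, λ₃ = −√α₋, λ₄ = √α₋, λ₅ = β/√v, λ₆ = √α₊`. -/
theorem mhd_eigenvectors
    (v β B₂ B₃ γ : ℝ) (hv : 0 < v) (hβ : β ≠ 0) (hγ : 1 < γ)
    (c2 αp αm : ℝ) (hc2 : c2 = γ * v ^ (-γ - 1))
    (hαp : αp = (1 / 2) * ((B₂ ^ 2 + B₃ ^ 2 + β ^ 2) / v + c2 +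
      Real.sqrt (((B₂ ^ 2 + B₃ ^ 2 + β ^ 2) / v + c2) ^ 2 - 4 * β ^ 2 * c2 / v)))
    (hαm : αm = (1 / 2) * ((B₂ ^ 2 + B₃ ^ 2 + β ^ 2) / v + c2 -
      Real.sqrt (((B₂ ^ 2 + B₃ ^ 2 + β ^ 2) / v + c2) ^ 2 - 4 * β ^ 2 * c2 / v)))
    (A : Matrix (Fin 6) (Fin 6) ℝ)
    (hA : A = !![0, 0, 0, -1, 0, 0;
                 0, 0, 0, B₂ / v, -(β / v), 0;
                 0, 0, 0, B₃ / v, 0, -(β / v);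
                 -c2, B₂, B₃, 0, 0, 0;
                 0, -β, 0, 0, 0, 0;
                 0, 0, -β, 0, 0, 0]) :
    (A.mulVec ![v / αp * (αp - β ^ 2 / v), -B₂, -B₃,
        v / Real.sqrt αp * (αp - β ^ 2 / v), -(β * B₂ / Real.sqrt αp), -(β * B₃ / Real.sqrt αp)] =
      (-Real.sqrt αp) • ![v / αp * (αp - β ^ 2 / v), -B₂, -B₃,
        v / Real.sqrt αp * (αp - β ^ 2 / v), -(β * B₂ / Real.sqrt αp), -(β * B₃ / Real.sqrt αp)]) ∧
    (A.mulVec ![0, β * B₃, -(β * B₂), 0, β * Real.sqrt v * B₃, -(β * Real.sqrt v * B₂)] =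
      (-(β / Real.sqrt v)) •
        ![0, β * B₃, -(β * B₂), 0, β * Real.sqrt v * B₃, -(β * Real.sqrt v * B₂)]) ∧
    (A.mulVec ![v / αm * (β ^ 2 / v - αm), B₂, B₃,
        v / Real.sqrt αm * (β ^ 2 / v - αm), β * B₂ / Real.sqrt αm, β * B₃ / Real.sqrt αm] =
      (-Real.sqrt αm) • ![v / αm * (β ^ 2 / v - αm), B₂, B₃,
        v / Real.sqrt αm * (β ^ 2 / v - αm), β * B₂ / Real.sqrt αm, β * B₃ / Real.sqrt αm]) ∧
    (A.mulVec ![-(v / αm * (β ^ 2 / v - αm)), -B₂, -B₃,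
        v / Real.sqrt αm * (β ^ 2 / v - αm), β * B₂ / Real.sqrt αm, β * B₃ / Real.sqrt αm] =
      (Real.sqrt αm) • ![-(v / αm * (β ^ 2 / v - αm)), -B₂, -B₃,
        v / Real.sqrt αm * (β ^ 2 / v - αm), β * B₂ / Real.sqrt αm, β * B₃ / Real.sqrt αm]) ∧
    (A.mulVec ![0, β * B₃, -(β * B₂), 0, -(β * Real.sqrt v * B₃), β * Real.sqrt v * B₂] =
      (β / Real.sqrt v) •
        ![0, β * B₃, -(β * B₂), 0, -(β * Real.sqrt v * B₃), β * Real.sqrt v * B₂]) ∧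
    (A.mulVec ![-(v / αp * (αp - β ^ 2 / v)), B₂, B₃,
        v / Real.sqrt αp * (αp - β ^ 2 / v), -(β * B₂ / Real.sqrt αp), -(β * B₃ / Real.sqrt αp)] =
      (Real.sqrt αp) • ![-(v / αp * (αp - β ^ 2 / v)), B₂, B₃,
        v / Real.sqrt αp * (αp - β ^ 2 / v), -(β * B₂ / Real.sqrt αp), -(β * B₃ / Real.sqrt αp)]) := by
  have hc : 0 < c2 := by
    rw [hc2]
    have := Real.rpow_pos_of_pos hv (-γ - 1)
    have : 0 < γ := by linarith
    positivity
  have hβ2 : 0 < β ^ 2 := by positivity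
  set S := (B₂ ^ 2 + B₃ ^ 2 + β ^ 2) / v + c2 with hS
  set D := S ^ 2 - 4 * β ^ 2 * c2 / v with hD
  have hSpos : 0 < S := by positivity
  have hprod : 0 < 4 * β ^ 2 * c2 / v := by positivity
  have hD0 : 0 ≤ D := by
    have e : D = (β ^ 2 / v - c2) ^ 2 + ((B₂ ^ 2 + B₃ ^ 2) / v) ^ 2
        + 2 * ((B₂ ^ 2 + B₃ ^ 2) / v) * (β ^ 2 / v + c2) := by
      rw [hD, hS]; ring
    rw [e]; positivity
  have hsq : Real.sqrt D ^ 2 = D := Real.sq_sqrt hD0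
  have hs0 : 0 ≤ Real.sqrt D := Real.sqrt_nonneg D
  have hlt : Real.sqrt D < S := by
    apply lt_of_pow_lt_pow_left₀ 2 hSpos.le
    rw [hsq]; linarith
  have hp : 0 < αp := by rw [hαp]; linarith
  have hm : 0 < αm := by rw [hαm]; linarith
  have qp : αp ^ 2 - S * αp + β ^ 2 * c2 / v = 0 := by
    rw [hαp]; linear_combination (1 / 4) * hsq + (1/4) * hD
  have qm : αm ^ 2 - S * αm + β ^ 2 * c2 / v = 0 := by
    rw [hαm]; linear_combination (1 / 4) * hsq + (1/4) * hD
  have key : ∀ α : ℝ, 0 < α → α ^ 2 - S * α + β ^ 2 * c2 / v = 0 → ∀ s : ℝ, s ^ 2 = α →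
      A.mulVec ![-(v / α * (α - β ^ 2 / v)), B₂, B₃, v / s * (α - β ^ 2 / v),
        -(β * B₂ / s), -(β * B₃ / s)] =
      s • ![-(v / α * (α - β ^ 2 / v)), B₂, B₃, v / s * (α - β ^ 2 / v),
        -(β * B₂ / s), -(β * B₃ / s)] := by
    intro α hα q s hs
    have hs' : s ≠ 0 := by rintro rfl; simp at hs; linarith
    subst hs
    rw [hS] at q
    have hv' : v ≠ 0 := hv.ne'
    field_simp at q
    rw [hA]
    ext i
    fin_cases i <;> simp [Matrix.mulVec, dotProduct, Fin.sum_univ_succ] <;> field_simp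
    · ring
    · ring
    · linear_combination (-1) * q
  have hv' : Real.sqrt v ≠ 0 := (Real.sqrt_pos.2 hv).ne'
  have hv2 : v = Real.sqrt v ^ 2 := (Real.sq_sqrt hv.le).symm
  have alf : ∀ w : ℝ, w ≠ 0 → v = w ^ 2 →
      A.mulVec ![0, β * B₃, -(β * B₂), 0, -(β * w * B₃), β * w * B₂] =
      (β / w) • ![0, β * B₃, -(β * B₂), 0, -(β * w * B₃), β * w * B₂] := by
    intro w hw e
    rw [hA, e]
    ext i
    fin_cases i <;> simp [Matrix.mulVec, dotProduct, Fin.sum_univ_succ] <;> field_simp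
    ring
  have sp : Real.sqrt αp ^ 2 = αp := Real.sq_sqrt hp.le
  have sm : Real.sqrt αm ^ 2 = αm := Real.sq_sqrt hm.le
  have neg6 : ∀ (a b c d e f s : ℝ) (a' b' c' d' e' f' : ℝ),
      A.mulVec ![a, b, c, d, e, f] = s • ![a, b, c, d, e, f] →
      a' = -a → b' = -b → c' = -c → d' = -d → e' = -e → f' = -f →
      A.mulVec ![a', b', c', d', e', f'] = s • ![a', b', c', d', e', f'] := by
    intro a b c d e f s a' b' c' d' e' f' h h1 h2 h3 h4 h5 h6
    have : ![a', b', c', d', e', f'] = -![a, b, c, d, e, f] := by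
      subst h1 h2 h3 h4 h5 h6; simp
    rw [this, Matrix.mulVec_neg, h, smul_neg]
  refine ⟨?_, ?_, ?_, ?_, ?_, ?_⟩
  · apply neg6 _ _ _ _ _ _ _ _ _ _ _ _ _ (key αp hp qp (-Real.sqrt αp) (by rw [neg_sq, sp])) <;>
      (try simp only [div_neg]) <;> ring
  · have h := alf (-Real.sqrt v) (neg_ne_zero.2 hv') (by rw [neg_sq]; exact hv2)
    convert h using 2 <;> simp [div_neg]
  · convert key αm hm qm (-Real.sqrt αm) (by rw [neg_sq, sm]) using 4 <;>
      (try simp only [div_neg]) <;> ring_nf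
  · apply neg6 _ _ _ _ _ _ _ _ _ _ _ _ _ (key αm hm qm (Real.sqrt αm) sm) <;> ring
  · exact alf _ hv' hv2
  · exact key αp hp qp _ sp
end

section
/- Let v>0, β>0, (B₂,B₃) ≠ (0,0), γ>1. Then the six eigenvalues of A are pairwise distinct and strictly ordered: −√α₊ < −β/√v < −√α_− < 0 < √α_− < β/√v < √α₊. In particular the planar isentropic MHD system is strictly hyperbolic at such states. -/
/-- For `v > 0`, `β > 0`, `(B₂,B₃) ≠ (0,0)` and `γ > 1`, the six eigenvalues of the
MHD coefficient matrix are pairwise distinct and strictly ordered: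
`−√α₊ < −β/√v < −√α₋ < 0 < √α₋ < β/√v < √α₊` (strict hyperbolicity). -/
theorem mhd_strict_hyperbolicity
    (v β B₂ B₃ γ : ℝ) (hv : 0 < v) (hβ : 0 < β) (hB : (B₂, B₃) ≠ (0, 0)) (hγ : 1 < γ)
    (c2 αp αm : ℝ) (hc2 : c2 = γ * v ^ (-γ - 1))
    (hαp : αp = (1 / 2) * ((B₂ ^ 2 + B₃ ^ 2 + β ^ 2) / v + c2 +
      Real.sqrt (((B₂ ^ 2 + B₃ ^ 2 + β ^ 2) / v + c2) ^ 2 - 4 * β ^ 2 * c2 / v)))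
    (hαm : αm = (1 / 2) * ((B₂ ^ 2 + B₃ ^ 2 + β ^ 2) / v + c2 -
      Real.sqrt (((B₂ ^ 2 + B₃ ^ 2 + β ^ 2) / v + c2) ^ 2 - 4 * β ^ 2 * c2 / v))) :
    -Real.sqrt αp < -(β / Real.sqrt v) ∧
    -(β / Real.sqrt v) < -Real.sqrt αm ∧
    -Real.sqrt αm < 0 ∧
    (0 : ℝ) < Real.sqrt αm ∧
    Real.sqrt αm < β / Real.sqrt v ∧
    β / Real.sqrt v < Real.sqrt αp := by
  have hc : 0 < c2 := by
    rw [hc2]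
    exact mul_pos (by linarith) (Real.rpow_pos_of_pos hv _)
  have hBpos : 0 < B₂ ^ 2 + B₃ ^ 2 := by
    by_cases h2 : B₂ = 0
    · have h3 : B₃ ≠ 0 := by
        intro h3
        exact hB (by rw [h2, h3])
      positivity
    · positivity
  obtain ⟨b, hb⟩ : ∃ b, b = (B₂ ^ 2 + B₃ ^ 2) / v := ⟨_, rfl⟩
  obtain ⟨a, ha⟩ : ∃ a, a = β ^ 2 / v := ⟨_, rfl⟩
  have hbpos : 0 < b := by rw [hb]; positivity
  have hapos : 0 < a := by rw [ha]; positivity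
  have e1 : (B₂ ^ 2 + B₃ ^ 2 + β ^ 2) / v = b + a := by rw [ha, hb]; ring
  have e2 : 4 * β ^ 2 * c2 / v = 4 * a * c2 := by rw [ha]; ring
  rw [e1, e2] at hαp hαm
  have hab := mul_pos hapos hbpos
  have hac := mul_pos hapos hc
  have k1 : |a - b - c2| < Real.sqrt ((b + a + c2) ^ 2 - 4 * a * c2) := by
    apply Real.lt_sqrt_of_sq_lt
    rw [sq_abs]
    nlinarith
  have k2 : Real.sqrt ((b + a + c2) ^ 2 - 4 * a * c2) < b + a + c2 := by
    rw [Real.sqrt_lt' (by positivity)]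
    linarith
  obtain ⟨k3, k4⟩ := abs_lt.mp k1
  have hm0 : 0 < αm := by rw [hαm]; linarith
  have hma : αm < a := by rw [hαm]; linarith
  have hap : a < αp := by rw [hαp]; linarith
  have es : β / Real.sqrt v = Real.sqrt a := by
    rw [ha, Real.sqrt_div (sq_nonneg β), Real.sqrt_sq hβ.le]
  rw [es]
  have r1 := Real.sqrt_pos.mpr hm0
  have r2 := Real.sqrt_lt_sqrt hm0.le hma
  have r3 := Real.sqrt_lt_sqrt hapos.le hap
  exact ⟨by linarith, by linarith, by linarith, r1, r2, r3⟩
end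

section
/- Let γ>1 and β ≠ 0 be fixed. On the open set {(v,B₂,B₃) : v>0, (B₂,B₃) ≠ (0,0)}, regard λ₁ = −√α₊, λ₃ = −√α_−, λ₄ = √α_−, λ₆ = √α₊ as smooth functions of (v,B₂,B₃). Then at every such point: (i) the directional derivative of λ₁ in the direction ((v/α₊)(α₊−β²/v), −B₂, −B₃) is strictly positive; (ii) the directional derivative of λ₃ in the direction ((v/α_−)(β²/v−α_−), B₂, B₃) is strictly positive; (iii) the directional derivative of λ₄ in the direction (−(v/α_−)(β²/v−α_−), −B₂, −B₃) is strictly positive; (iv) the directional derivative of λ₆ in the direction (−(v/α₊)(α₊−β²/v), B₂, B₃) is strictly positive. (These directions are the first three components of the eigenvectors r₁, r₃, r₄, r₆, so the 1st, 3rd, 4th and 6th characteristic fields are genuinely nonlinear.) -/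
theorem mhd_aux (γ β : ℝ) (hγ : 1 < γ) (hβ : β ≠ 0) (σ : ℝ) (hσ : σ = 1 ∨ σ = -1)
    (f : ℝ → ℝ → ℝ → ℝ)
    (hf : ∀ v B₂ B₃ : ℝ, f v B₂ B₃ = (1 / 2) * ((B₂ ^ 2 + B₃ ^ 2 + β ^ 2) / v + γ * v ^ (-γ - 1) +
      σ * Real.sqrt (((B₂ ^ 2 + B₃ ^ 2 + β ^ 2) / v + γ * v ^ (-γ - 1)) ^ 2
        - 4 * β ^ 2 * (γ * v ^ (-γ - 1)) / v)))
    (v B₂ B₃ : ℝ) (hv : 0 < v) (hB : (B₂, B₃) ≠ (0, 0)) :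
    0 < f v B₂ B₃ ∧ ∃ d, HasLineDerivAt ℝ (fun p : ℝ × ℝ × ℝ => Real.sqrt (f p.1 p.2.1 p.2.2)) d
      (v, B₂, B₃) (v - β ^ 2 / f v B₂ B₃, -B₂, -B₃) ∧ σ * d < 0 := by
  have hs : 0 < B₂ ^ 2 + B₃ ^ 2 := by
    by_contra h
    apply hB
    have h2 : B₂ = 0 := by nlinarith [sq_nonneg B₂, sq_nonneg B₃]
    have h3 : B₃ = 0 := by nlinarith [sq_nonneg B₂, sq_nonneg B₃]
    simp [h2, h3]
  have hb : 0 < β ^ 2 := by positivity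
  have hσ2 : σ * σ = 1 := by rcases hσ with h | h <;> rw [h] <;> norm_num
  have hc : 0 < γ * v ^ (-γ - 1) := by positivity
  obtain ⟨α, hα⟩ : ∃ α, α = f v B₂ B₃ := ⟨_, rfl⟩
  obtain ⟨c, hcc⟩ : ∃ c, c = γ * v ^ (-γ - 1) := ⟨_, rfl⟩
  obtain ⟨T, hT⟩ : ∃ T, T = (B₂ ^ 2 + B₃ ^ 2 + β ^ 2) / v + c := ⟨_, rfl⟩
  obtain ⟨P, hP⟩ : ∃ P, P = β ^ 2 * c / v := ⟨_, rfl⟩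
  obtain ⟨S, hS⟩ : ∃ S, S = Real.sqrt (T ^ 2 - 4 * P) := ⟨_, rfl⟩
  rw [← hcc] at hc
  have hTpos : 0 < T := by rw [hT]; positivity
  have hPpos : 0 < P := by rw [hP]; positivity
  have hD : 0 < T ^ 2 - 4 * P := by
    have : T ^ 2 - 4 * P = ((B₂ ^ 2 + B₃ ^ 2) / v + β ^ 2 / v - c) ^ 2
        + 4 * c * (B₂ ^ 2 + B₃ ^ 2) / v := by
      rw [hT, hP]; field_simp; ring
    rw [this]; positivity
  have hSpos : 0 < S := by rw [hS]; exact Real.sqrt_pos.2 hD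
  have hS2 : S * S = T ^ 2 - 4 * P := by rw [hS]; exact Real.mul_self_sqrt hD.le
  have hαT : α = (T + σ * S) / 2 := by
    rw [hα, hf, ← hcc, ← hT, hS, hP,
      show 4 * β ^ 2 * c / v = 4 * (β ^ 2 * c / v) by ring]; ring
  have hST : S < T := by nlinarith
  have hαpos : 0 < α := by
    rw [hαT]; rcases hσ with h | h <;> rw [h] <;> linarith
  have hq : α * α - T * α + P = 0 := by
    rw [hαT]; linear_combination (S * S / 4) * hσ2 + hS2 / 4
  refine ⟨hα ▸ hαpos, ?_⟩
  rw [← hα]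
  obtain ⟨a, ha⟩ : ∃ a, a = v - β ^ 2 / α := ⟨_, rfl⟩
  rw [← ha]
  have hsα : (α - c) * (α - β ^ 2 / v) = (B₂ ^ 2 + B₃ ^ 2) / v * α := by
    rw [hT, hP] at hq
    linear_combination hq
  have hprod : 0 < (α - c) * (α - β ^ 2 / v) := by rw [hsα]; positivity
  have haα : a = v / α * (α - β ^ 2 / v) := by rw [ha]; field_simp
  have h1 : 0 < a * (α - c) := by
    rw [haα, show v / α * (α - β ^ 2 / v) * (α - c) = v / α * ((α - c) * (α - β ^ 2 / v)) by ring]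
    positivity
  have h2 : 0 ≤ a * (α - β ^ 2 / v) := by
    rw [haα, mul_assoc]; exact mul_nonneg (by positivity) (mul_self_nonneg _)
  obtain ⟨dc, hdc⟩ : ∃ dc, dc = -(γ + 1) * c * a / v := ⟨_, rfl⟩
  have hV : HasDerivAt (fun t : ℝ => v + t * a) a 0 := by
    simpa using ((hasDerivAt_id (0 : ℝ)).mul_const a).const_add v
  have hX : ∀ x : ℝ, HasDerivAt (fun t : ℝ => x + t * (-x)) (-x) 0 := fun x => by
    simpa using ((hasDerivAt_id (0 : ℝ)).mul_const (-x)).const_add x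
  have hC : HasDerivAt (fun t : ℝ => γ * (v + t * a) ^ (-γ - 1)) dc 0 := by
    have := (hV.rpow_const (p := -γ - 1) (Or.inl (by simpa using hv.ne'))).const_mul γ
    refine HasDerivAt.congr_deriv this (Eq.symm ?_)
    rw [hdc, hcc]
    simp only [zero_mul, add_zero]
    rw [Real.rpow_sub_one hv.ne' (-γ - 1)]
    ring
  obtain ⟨dT, hdT⟩ : ∃ dT, dT = -2 * (B₂ ^ 2 + B₃ ^ 2) / v
      - (B₂ ^ 2 + B₃ ^ 2 + β ^ 2) * a / v ^ 2 + dc := ⟨_, rfl⟩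
  obtain ⟨dP, hdP⟩ : ∃ dP, dP = β ^ 2 * dc / v - β ^ 2 * c * a / v ^ 2 := ⟨_, rfl⟩
  have hv0 : v + 0 * a ≠ 0 := by simpa using hv.ne'
  have hTd : HasDerivAt (fun t : ℝ => ((B₂ + t * (-B₂)) ^ 2 + (B₃ + t * (-B₃)) ^ 2 + β ^ 2)
      / (v + t * a) + γ * (v + t * a) ^ (-γ - 1)) dT 0 := by
    have := (((((hX B₂).pow 2).add ((hX B₃).pow 2)).add_const (β ^ 2)).div hV hv0).add hC
    refine HasDerivAt.congr_deriv this (Eq.symm ?_)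
    rw [hdT]
    simp
    field_simp
    ring
  have hPd : HasDerivAt (fun t : ℝ => 4 * β ^ 2 * (γ * (v + t * a) ^ (-γ - 1)) / (v + t * a))
      (4 * dP) 0 := by
    have := (hC.const_mul (4 * β ^ 2)).div hV hv0
    refine HasDerivAt.congr_deriv this (Eq.symm ?_)
    rw [hdP]
    simp only [zero_mul, add_zero, ← hcc]
    field_simp
  have hDv : ((B₂ + 0 * (-B₂)) ^ 2 + (B₃ + 0 * (-B₃)) ^ 2 + β ^ 2)
      / (v + 0 * a) + γ * (v + 0 * a) ^ (-γ - 1) = T := by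
    simp [hT, hcc]
  have hPv : 4 * β ^ 2 * (γ * (v + 0 * a) ^ (-γ - 1)) / (v + 0 * a) = 4 * P := by
    simp only [zero_mul, add_zero, ← hcc, hP]; ring
  have hSd := ((hTd.pow 2).sub hPd).sqrt (by
    simp only [Pi.sub_apply, Pi.pow_apply]
    rw [hDv, hPv]; exact hD.ne')
  have hF := ((hTd.add (hSd.const_mul σ)).const_mul (1 / 2))
  have hF' : HasDerivAt (fun t : ℝ => f (v + t * a) (B₂ + t * (-B₂)) (B₃ + t * (-B₃)))
      (σ * ((α * dT - dP) / S)) 0 := by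
    have hfun : (fun t : ℝ => f (v + t * a) (B₂ + t * (-B₂)) (B₃ + t * (-B₃))) = _ :=
      funext fun t => hf _ _ _
    rw [hfun]
    refine HasDerivAt.congr_deriv hF (Eq.symm ?_)
    · simp only [Pi.sub_apply, Pi.pow_apply]
      rw [hDv, hPv, ← hS, hαT]
      field_simp
      push_cast
      linear_combination (2 * S * dT) * hσ2
  have hN : α * dT - dP < 0 := by
    have e : α * dT - dP = -((γ + 1) * c / v * (a * (α - β ^ 2 / v)))
        - 2 * α * (B₂ ^ 2 + B₃ ^ 2) / v - α / v * (a * (α - c)) := by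
      rw [hdT, hdP, hdc]
      rw [hT, hP] at hq
      linear_combination (a / v) * hq
    rw [e]
    have : 0 ≤ (γ + 1) * c / v * (a * (α - β ^ 2 / v)) := mul_nonneg (by positivity) h2
    have : 0 < 2 * α * (B₂ ^ 2 + B₃ ^ 2) / v := by positivity
    have : 0 < α / v * (a * (α - c)) := by positivity
    linarith
  have hf0 : f (v + 0 * a) (B₂ + 0 * (-B₂)) (B₃ + 0 * (-B₃)) = α := by simp [hα]
  have hG := hF'.sqrt (by rw [hf0]; exact hαpos.ne')
  rw [hf0] at hG
  refine ⟨σ * ((α * dT - dP) / S) / (2 * Real.sqrt α), ?_, ?_⟩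
  · unfold HasLineDerivAt
    exact hG
  · rw [show σ * (σ * ((α * dT - dP) / S) / (2 * Real.sqrt α))
      = (σ * σ) * ((α * dT - dP) / S / (2 * Real.sqrt α)) by ring, hσ2, one_mul]
    have := Real.sqrt_pos.2 hαpos
    exact div_neg_of_neg_of_pos (div_neg_of_neg_of_pos hN hSpos) (by positivity)


/-- For fixed `γ > 1` and `β ≠ 0`, regard `λ₁ = −√α₊`, `λ₃ = −√α₋`, `λ₄ = √α₋`,
`λ₆ = √α₊` as functions of `(v,B₂,B₃)` on `{v > 0, (B₂,B₃) ≠ (0,0)}`. At every such point the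
directional derivative of `λ₁`, `λ₃`, `λ₄`, `λ₆` in the direction of the first three components
of the eigenvectors `r₁`, `r₃`, `r₄`, `r₆` respectively is strictly positive (genuine
nonlinearity of the 1st, 3rd, 4th and 6th characteristic fields). -/
theorem mhd_genuine_nonlinearity
    (γ β : ℝ) (hγ : 1 < γ) (hβ : β ≠ 0)
    (c2 αp αm : ℝ → ℝ → ℝ → ℝ)
    (hc2 : ∀ v B₂ B₃ : ℝ, c2 v B₂ B₃ = γ * v ^ (-γ - 1))
    (hαp : ∀ v B₂ B₃ : ℝ, αp v B₂ B₃ = (1 / 2) * ((B₂ ^ 2 + B₃ ^ 2 + β ^ 2) / v + c2 v B₂ B₃ +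
      Real.sqrt (((B₂ ^ 2 + B₃ ^ 2 + β ^ 2) / v + c2 v B₂ B₃) ^ 2 - 4 * β ^ 2 * c2 v B₂ B₃ / v)))
    (hαm : ∀ v B₂ B₃ : ℝ, αm v B₂ B₃ = (1 / 2) * ((B₂ ^ 2 + B₃ ^ 2 + β ^ 2) / v + c2 v B₂ B₃ -
      Real.sqrt (((B₂ ^ 2 + B₃ ^ 2 + β ^ 2) / v + c2 v B₂ B₃) ^ 2 - 4 * β ^ 2 * c2 v B₂ B₃ / v)))
    (v B₂ B₃ : ℝ) (hv : 0 < v) (hB : (B₂, B₃) ≠ (0, 0)) :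
    (0 < lineDeriv ℝ (fun p : ℝ × ℝ × ℝ => -Real.sqrt (αp p.1 p.2.1 p.2.2)) (v, B₂, B₃)
        (v / αp v B₂ B₃ * (αp v B₂ B₃ - β ^ 2 / v), -B₂, -B₃)) ∧
    (0 < lineDeriv ℝ (fun p : ℝ × ℝ × ℝ => -Real.sqrt (αm p.1 p.2.1 p.2.2)) (v, B₂, B₃)
        (v / αm v B₂ B₃ * (β ^ 2 / v - αm v B₂ B₃), B₂, B₃)) ∧
    (0 < lineDeriv ℝ (fun p : ℝ × ℝ × ℝ => Real.sqrt (αm p.1 p.2.1 p.2.2)) (v, B₂, B₃)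
        (-(v / αm v B₂ B₃ * (β ^ 2 / v - αm v B₂ B₃)), -B₂, -B₃)) ∧
    (0 < lineDeriv ℝ (fun p : ℝ × ℝ × ℝ => Real.sqrt (αp p.1 p.2.1 p.2.2)) (v, B₂, B₃)
        (-(v / αp v B₂ B₃ * (αp v B₂ B₃ - β ^ 2 / v)), B₂, B₃)) := by
  obtain ⟨pp, dp, hp, hp0⟩ := mhd_aux γ β hγ hβ 1 (Or.inl rfl) αp
    (fun v B₂ B₃ => by rw [hαp, hc2]; ring_nf) v B₂ B₃ hv hB
  obtain ⟨pm, dm, hm, hm0⟩ := mhd_aux γ β hγ hβ (-1) (Or.inr rfl) αm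
    (fun v B₂ B₃ => by rw [hαm, hc2]; ring_nf) v B₂ B₃ hv hB
  have e1 : v / αp v B₂ B₃ * (αp v B₂ B₃ - β ^ 2 / v) = v - β ^ 2 / αp v B₂ B₃ := by
    field_simp
  have e2 : v / αm v B₂ B₃ * (β ^ 2 / v - αm v B₂ B₃) = -(v - β ^ 2 / αm v B₂ B₃) := by
    field_simp; ring
  have n1 : ∀ a : ℝ, (-a, B₂, B₃) = -((a, -B₂, -B₃) : ℝ × ℝ × ℝ) := fun a => by simp
  have hpn : HasLineDerivAt ℝ (fun p : ℝ × ℝ × ℝ => -Real.sqrt (αp p.1 p.2.1 p.2.2)) (-dp)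
      (v, B₂, B₃) (v - β ^ 2 / αp v B₂ B₃, -B₂, -B₃) := HasDerivAt.neg hp
  have hmn : HasLineDerivAt ℝ (fun p : ℝ × ℝ × ℝ => -Real.sqrt (αm p.1 p.2.1 p.2.2)) (-dm)
      (v, B₂, B₃) (v - β ^ 2 / αm v B₂ B₃, -B₂, -B₃) := HasDerivAt.neg hm
  rw [e1, e2, neg_neg, n1, n1, lineDeriv_neg, lineDeriv_neg, hp.lineDeriv, hpn.lineDeriv,
    hm.lineDeriv, hmn.lineDeriv]
  refine ⟨?_, ?_, ?_, ?_⟩ <;> linarith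
end

section
/- Let γ>1, β∈ℝ, v_l, v_r > 0, σ ≠ 0, and suppose the states U_l, U_r satisfy the six Rankine–Hugoniot conditions with speed σ. Set B_{i,l} = q_{i,l}/v_l and B_{i,r} = q_{i,r}/v_r for i = 2,3. If β²/σ² ≠ v_r, then B_{i,r} − B_{i,l} = ((v_r − v_l)/(β²σ^{-2} − v_r))·B_{i,l} for i=2,3. If in addition σ² < β²/v_r and v_r < v_l (Lax condition for a 3-shock and compression), then for each i=2,3: B_{i,r} − B_{i,l} < 0 if B_{i,l} > 0; B_{i,r} − B_{i,l} > 0 if B_{i,l} < 0; and B_{i,r} = B_{i,l} if B_{i,l} = 0. -/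
theorem mhd_aux_s6 (β σ vl vr ql ul qr ur : ℝ) (hvl : 0 < vl) (hvr : 0 < vr) (hσ : σ ≠ 0)
    (h1 : -(β * (ur - ul)) = σ * (qr - ql))
    (h2 : -(β * (qr / vr - ql / vl)) = σ * (ur - ul)) :
    (qr / vr - ql / vl) * (β ^ 2 / σ ^ 2 - vr) = (vr - vl) * (ql / vl) := by
  obtain ⟨b, rfl⟩ : ∃ b, qr = b * vr := ⟨qr / vr, by field_simp⟩
  obtain ⟨a, rfl⟩ : ∃ a, ql = a * vl := ⟨ql / vl, by field_simp⟩
  rw [mul_div_cancel_right₀ _ hvr.ne', mul_div_cancel_right₀ _ hvl.ne'] at *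
  have h : β ^ 2 * (b - a) = σ ^ 2 * (b * vr - a * vl) := by
    linear_combination (-β) * h2 + σ * h1
  field_simp
  linear_combination h

theorem mhd_sign (x D d a : ℝ) (hD : 0 < D) (hd : d < 0) (h : x * D = d * a) :
    (0 < a → x < 0) ∧ (a < 0 → 0 < x) ∧ (a = 0 → x = 0) := by
  refine ⟨fun ha => ?_, fun ha => ?_, fun ha => ?_⟩
  · have := mul_neg_of_neg_of_pos hd ha
    by_contra! hx
    nlinarith [mul_nonneg hx hD.le]
  · have := mul_pos_of_neg_of_neg hd ha
    exact pos_of_mul_pos_left (h ▸ this) hD.le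
  · subst ha
    simpa [hD.ne'] using h

/-- For states `U_l, U_r` satisfying the Rankine–Hugoniot conditions with speed
`σ ≠ 0`, setting `B_i = q_i/v`: if `β²/σ² ≠ v_r` then
`B_{i,r} − B_{i,l} = ((v_r − v_l)/(β²σ⁻² − v_r))·B_{i,l}` for `i = 2,3`; and if in addition
`σ² < β²/v_r` and `v_r < v_l` (Lax condition for a 3-shock and compression), then
`B_{i,r} − B_{i,l}` has sign opposite to `B_{i,l}` (and vanishes iff `B_{i,l} = 0`). -/
theorem mhd_transverse_field_sign_3shock
    (γ β σ vl vr q2l q3l u1l u2l u3l q2r q3r u1r u2r u3r : ℝ)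
    (hγ : 1 < γ) (hvl : 0 < vl) (hvr : 0 < vr) (hσ : σ ≠ 0)
    (rh1 : -(u1r - u1l) = σ * (vr - vl))
    (rh2 : -(β * (u2r - u2l)) = σ * (q2r - q2l))
    (rh3 : -(β * (u3r - u3l)) = σ * (q3r - q3l))
    (rh4 : (vr ^ (-γ) - vl ^ (-γ)) +
      ((q2r ^ 2 + q3r ^ 2) / (2 * vr ^ 2) - (q2l ^ 2 + q3l ^ 2) / (2 * vl ^ 2)) =
        σ * (u1r - u1l))
    (rh5 : -(β * (q2r / vr - q2l / vl)) = σ * (u2r - u2l))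
    (rh6 : -(β * (q3r / vr - q3l / vl)) = σ * (u3r - u3l)) :
    (β ^ 2 / σ ^ 2 ≠ vr →
      (q2r / vr - q2l / vl = ((vr - vl) / (β ^ 2 / σ ^ 2 - vr)) * (q2l / vl) ∧
       q3r / vr - q3l / vl = ((vr - vl) / (β ^ 2 / σ ^ 2 - vr)) * (q3l / vl))) ∧
    (σ ^ 2 < β ^ 2 / vr → vr < vl →
      ((0 < q2l / vl → q2r / vr - q2l / vl < 0) ∧
       (q2l / vl < 0 → 0 < q2r / vr - q2l / vl) ∧
       (q2l / vl = 0 → q2r / vr = q2l / vl) ∧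
       (0 < q3l / vl → q3r / vr - q3l / vl < 0) ∧
       (q3l / vl < 0 → 0 < q3r / vr - q3l / vl) ∧
       (q3l / vl = 0 → q3r / vr = q3l / vl))) := by
  have e2 := mhd_aux_s6 β σ vl vr q2l u2l q2r u2r hvl hvr hσ rh2 rh5
  have e3 := mhd_aux_s6 β σ vl vr q3l u3l q3r u3r hvl hvr hσ rh3 rh6
  refine ⟨fun hne => ?_, fun hl hc => ?_⟩
  · have hD := sub_ne_zero.mpr hne
    constructor
    · rw [div_mul_eq_mul_div, eq_div_iff hD, e2]
    · rw [div_mul_eq_mul_div, eq_div_iff hD, e3]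
  · have hs : 0 < σ ^ 2 := by positivity
    have hD : 0 < β ^ 2 / σ ^ 2 - vr := by
      rw [lt_div_iff₀ hvr] at hl
      rw [sub_pos, lt_div_iff₀ hs]
      linarith
    obtain ⟨a1, a2, a3⟩ := mhd_sign _ _ _ _ hD (sub_neg.mpr hc) e2
    obtain ⟨b1, b2, b3⟩ := mhd_sign _ _ _ _ hD (sub_neg.mpr hc) e3
    exact ⟨a1, a2, fun h => sub_eq_zero.mp (a3 h), b1, b2, fun h => sub_eq_zero.mp (b3 h)⟩
end

section
/- Let γ>1, β∈ℝ, v_l, v_r > 0, σ ≠ 0, and suppose the states U_l, U_r satisfy the six Rankine–Hugoniot conditions with speed σ. Set B_{i,l} = q_{i,l}/v_l and B_{i,r} = q_{i,r}/v_r for i = 2,3. If β²/σ² ≠ v_l, then B_{i,l} − B_{i,r} = ((v_r − v_l)/(v_l − β²σ^{-2}))·B_{i,r} for i=2,3. If in addition σ² < β²/v_l and v_r > v_l (Lax condition for a 4-shock), then for each i=2,3: B_{i,l} − B_{i,r} < 0 if B_{i,r} > 0; B_{i,l} − B_{i,r} > 0 if B_{i,r} < 0; and B_{i,l} = B_{i,r}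 if B_{i,r} = 0. -/
theorem aux_key (β σ vl vr ql qr ul ur : ℝ) (hvl : 0 < vl) (hvr : 0 < vr) (hσ : σ ≠ 0)
    (h1 : -(β * (ur - ul)) = σ * (qr - ql))
    (h2 : -(β * (qr / vr - ql / vl)) = σ * (ur - ul)) :
    (vl - β ^ 2 / σ ^ 2) * (ql / vl - qr / vr) = (vr - vl) * (qr / vr) := by
  obtain ⟨a, rfl⟩ : ∃ a, ql = a * vl := ⟨ql / vl, by field_simp⟩
  obtain ⟨b, rfl⟩ : ∃ b, qr = b * vr := ⟨qr / vr, by field_simp⟩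
  rw [mul_div_cancel_right₀ _ hvl.ne', mul_div_cancel_right₀ _ hvr.ne'] at *
  have hs : σ ^ 2 ≠ 0 := pow_ne_zero 2 hσ
  have h3 : vl - β ^ 2 / σ ^ 2 = (vl * σ ^ 2 - β ^ 2) / σ ^ 2 := by field_simp
  rw [h3, div_mul_eq_mul_div, div_eq_iff hs]
  linear_combination σ * h1 - β * h2

theorem aux_eq (β σ vl vr a b : ℝ) (h : β ^ 2 / σ ^ 2 ≠ vl)
    (hk : (vl - β ^ 2 / σ ^ 2) * (a - b) = (vr - vl) * b) :
    a - b = ((vr - vl) / (vl - β ^ 2 / σ ^ 2)) * b := by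
  have h' : vl - β ^ 2 / σ ^ 2 ≠ 0 := sub_ne_zero.mpr h.symm
  rw [div_mul_eq_mul_div, eq_div_iff h']
  linarith

theorem aux_sign (c d vl vr a b : ℝ) (hc : c < 0) (hv : vl < vr) (hd : d = a - b)
    (hk : c * d = (vr - vl) * b) :
    (0 < b → a - b < 0) ∧ (b < 0 → 0 < a - b) ∧ (b = 0 → a = b) := by
  rw [← hd]
  have hv' : 0 < vr - vl := sub_pos.mpr hv
  refine ⟨fun hb => ?_, fun hb => ?_, fun hb => ?_⟩
  · have := mul_pos hv' hb
    by_contra hn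
    nlinarith [mul_nonneg (neg_nonneg.mpr hc.le) (not_lt.mp hn)]
  · have := mul_pos hv' (neg_pos.mpr hb)
    by_contra hn
    nlinarith [mul_nonneg (neg_nonneg.mpr hc.le) (neg_nonneg.mpr (not_lt.mp hn))]
  · rw [hb, mul_zero] at hk
    rcases mul_eq_zero.mp hk with h | h <;> linarith

/-- For states `U_l, U_r` satisfying the Rankine–Hugoniot conditions with speed
`σ ≠ 0`, setting `B_i = q_i/v`: if `β²/σ² ≠ v_l` then
`B_{i,l} − B_{i,r} = ((v_r − v_l)/(v_l − β²σ⁻²))·B_{i,r}` for `i = 2,3`; and if in addition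
`σ² < β²/v_l` and `v_r > v_l` (Lax condition for a 4-shock), then
`B_{i,l} − B_{i,r}` has sign opposite to `B_{i,r}` (and vanishes iff `B_{i,r} = 0`). -/
theorem mhd_transverse_field_sign_4shock
    (γ β σ vl vr q2l q3l u1l u2l u3l q2r q3r u1r u2r u3r : ℝ)
    (hγ : 1 < γ) (hvl : 0 < vl) (hvr : 0 < vr) (hσ : σ ≠ 0)
    (rh1 : -(u1r - u1l) = σ * (vr - vl))
    (rh2 : -(β * (u2r - u2l)) = σ * (q2r - q2l))
    (rh3 : -(β * (u3r - u3l)) = σ * (q3r - q3l))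
    (rh4 : (vr ^ (-γ) - vl ^ (-γ)) +
      ((q2r ^ 2 + q3r ^ 2) / (2 * vr ^ 2) - (q2l ^ 2 + q3l ^ 2) / (2 * vl ^ 2)) =
        σ * (u1r - u1l))
    (rh5 : -(β * (q2r / vr - q2l / vl)) = σ * (u2r - u2l))
    (rh6 : -(β * (q3r / vr - q3l / vl)) = σ * (u3r - u3l)) :
    (β ^ 2 / σ ^ 2 ≠ vl →
      (q2l / vl - q2r / vr = ((vr - vl) / (vl - β ^ 2 / σ ^ 2)) * (q2r / vr) ∧
       q3l / vl - q3r / vr = ((vr - vl) / (vl - β ^ 2 / σ ^ 2)) * (q3r / vr))) ∧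
    (σ ^ 2 < β ^ 2 / vl → vl < vr →
      ((0 < q2r / vr → q2l / vl - q2r / vr < 0) ∧
       (q2r / vr < 0 → 0 < q2l / vl - q2r / vr) ∧
       (q2r / vr = 0 → q2l / vl = q2r / vr) ∧
       (0 < q3r / vr → q3l / vl - q3r / vr < 0) ∧
       (q3r / vr < 0 → 0 < q3l / vl - q3r / vr) ∧
       (q3r / vr = 0 → q3l / vl = q3r / vr))) := by
  have k2 := aux_key β σ vl vr q2l q2r u2l u2r hvl hvr hσ rh2 rh5
  have k3 := aux_key β σ vl vr q3l q3r u3l u3r hvl hvr hσ rh3 rh6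
  refine ⟨fun h => ⟨aux_eq _ _ _ _ _ _ h k2, aux_eq _ _ _ _ _ _ h k3⟩, fun hs hv => ?_⟩
  have hc : vl - β ^ 2 / σ ^ 2 < 0 := by
    have hp : 0 < σ ^ 2 := by positivity
    rw [lt_div_iff₀ hvl] at hs
    rw [sub_neg, lt_div_iff₀ hp]
    linarith
  obtain ⟨a1, a2, a3⟩ := aux_sign _ _ _ _ _ _ hc hv rfl k2
  obtain ⟨b1, b2, b3⟩ := aux_sign _ _ _ _ _ _ hc hv rfl k3
  exact ⟨a1, a2, a3, b1, b2, b3⟩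
end

section
/- Let γ>1, let U_l, U_r be states with v_l, v_r > 0, and let 0 < a < 1. Then there exists c_* > 0 such that every state U = (v,q₂,q₃,u₁,u₂,u₃) with 0 < v ≤ c_* satisfies η(U|U_l) > a·η(U|U_r). In other words, the set {U : v>0, η(U|U_l) ≤ a·η(U|U_r)} is contained in {U : v > c_*}. -/
/-- The entropy `η(U) = v^(1-γ)/(γ-1) + ½(u₁²+u₂²+u₃²) + (q₂²+q₃²)/(2v)` of planar isentropic
MHD, in conservative variables `U = (v,q₂,q₃,u₁,u₂,u₃)`. -/
noncomputable def mhdEntropy (γ : ℝ) (U : Fin 6 → ℝ) : ℝ :=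
  (U 0) ^ (1 - γ) / (γ - 1) + (U 3 ^ 2 + U 4 ^ 2 + U 5 ^ 2) / 2 + (U 1 ^ 2 + U 2 ^ 2) / (2 * U 0)

/-- The gradient `∇η(U) = (−v^(−γ) − (q₂²+q₃²)/(2v²), q₂/v, q₃/v, u₁, u₂, u₃)`. -/
noncomputable def mhdEntropyGrad (γ : ℝ) (U : Fin 6 → ℝ) : Fin 6 → ℝ :=
  ![-(U 0) ^ (-γ) - (U 1 ^ 2 + U 2 ^ 2) / (2 * U 0 ^ 2), U 1 / U 0, U 2 / U 0, U 3, U 4, U 5]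

/-- The relative entropy `η(U|V) = η(U) − η(V) − ∇η(V)·(U − V)`. -/
noncomputable def mhdRelEntropy (γ : ℝ) (U V : Fin 6 → ℝ) : ℝ :=
  mhdEntropy γ U - mhdEntropy γ V - ∑ i : Fin 6, mhdEntropyGrad γ V i * (U i - V i)

theorem aux_quad (b g x : ℝ) (hb : 0 < b) : -(g ^ 2 / (2 * b)) ≤ b * (x ^ 2 / 2) + g * x := by
  have h : b * (x ^ 2 / 2) + g * x + g ^ 2 / (2 * b) = (b * x + g) ^ 2 / (2 * b) := by
    field_simp
    ring
  have : 0 ≤ (b * x + g) ^ 2 / (2 * b) := by positivity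
  linarith

theorem aux_small (γ K : ℝ) (hγ : 1 < γ) :
    ∃ c : ℝ, 0 < c ∧ c ≤ 1 ∧ ∀ v : ℝ, 0 < v → v ≤ c → K < v ^ (1 - γ) := by
  have hM : (0:ℝ) < |K| + 1 := by positivity
  have hM1 : (1:ℝ) ≤ |K| + 1 := by linarith [abs_nonneg K]
  have hne : 1 - γ ≠ 0 := by linarith
  refine ⟨(|K| + 1) ^ (1 / (1 - γ)), by positivity, ?_, ?_⟩
  · apply Real.rpow_le_one_of_one_le_of_nonpos hM1
    exact div_nonpos_of_nonneg_of_nonpos zero_le_one (by linarith)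
  · intro v hv hvc
    have h := Real.rpow_le_rpow_of_nonpos hv hvc (show 1 - γ ≤ 0 by linarith)
    rw [← Real.rpow_mul hM.le, one_div, inv_mul_cancel₀ hne, Real.rpow_one] at h
    linarith [le_abs_self K]

/-- For `γ > 1`, states `U_l, U_r` with `v_l, v_r > 0` and `0 < a < 1`, there is
`c_* > 0` such that every state `U` with `0 < v ≤ c_*` satisfies `η(U|U_l) > a·η(U|U_r)`;
i.e. the set `{U : v > 0, η(U|U_l) ≤ a·η(U|U_r)}` is contained in `{U : v > c_*}`. -/
theorem mhd_relative_entropy_small_volume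
    (γ a : ℝ) (hγ : 1 < γ) (ha0 : 0 < a) (ha1 : a < 1)
    (Ul Ur : Fin 6 → ℝ) (hvl : 0 < Ul 0) (hvr : 0 < Ur 0) :
    ∃ cstar : ℝ, 0 < cstar ∧
      ∀ U : Fin 6 → ℝ, 0 < U 0 → U 0 ≤ cstar →
        a * mhdRelEntropy γ U Ur < mhdRelEntropy γ U Ul := by
  have hb : 0 < 1 - a := by linarith
  have hg1 : 0 < γ - 1 := by linarith
  set b := 1 - a with hbdef
  set g : Fin 6 → ℝ := fun i => a * mhdEntropyGrad γ Ur i - mhdEntropyGrad γ Ul i with hg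
  set C : ℝ := a * mhdEntropy γ Ur - mhdEntropy γ Ul
    - ∑ i : Fin 6, (a * mhdEntropyGrad γ Ur i * Ur i - mhdEntropyGrad γ Ul i * Ul i) with hC
  set K : ℝ := -C + |g 0| + (g 1 ^ 2 / (2 * b) + g 2 ^ 2 / (2 * b) + g 3 ^ 2 / (2 * b)
    + g 4 ^ 2 / (2 * b) + g 5 ^ 2 / (2 * b)) with hK
  obtain ⟨c, hc0, hc1, hc⟩ := aux_small γ (K * (γ - 1) / b) hγ
  refine ⟨c, hc0, fun U hU hUc => ?_⟩
  have key : mhdRelEntropy γ U Ul - a * mhdRelEntropy γ U Ur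
      = b * mhdEntropy γ U + C + ∑ i : Fin 6, g i * U i := by
    simp only [mhdRelEntropy, hC, hg, hbdef, Fin.sum_univ_six]
    ring
  have h0 := hc (U 0) hU hUc
  have h1 : K < b * ((U 0) ^ (1 - γ) / (γ - 1)) := by
    rw [div_lt_iff₀ hb] at h0
    rw [← mul_div_assoc, lt_div_iff₀ hg1]
    linarith
  have hv1 : U 0 ≤ 1 := hUc.trans hc1
  have hq : (U 1 ^ 2 + U 2 ^ 2) / 2 ≤ (U 1 ^ 2 + U 2 ^ 2) / (2 * U 0) :=
    div_le_div_of_nonneg_left (by positivity) (by positivity) (by linarith)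
  have hq' := mul_le_mul_of_nonneg_left hq hb.le
  have hg0 : -|g 0| ≤ g 0 * U 0 := by
    have : |g 0 * U 0| ≤ |g 0| := by
      rw [abs_mul, abs_of_pos hU]
      exact mul_le_of_le_one_right (abs_nonneg _) hv1
    linarith [neg_abs_le (g 0 * U 0)]
  have e1 := aux_quad b (g 1) (U 1) hb
  have e2 := aux_quad b (g 2) (U 2) hb
  have e3 := aux_quad b (g 3) (U 3) hb
  have e4 := aux_quad b (g 4) (U 4) hb
  have e5 := aux_quad b (g 5) (U 5) hb
  have e : mhdEntropy γ U = (U 0) ^ (1 - γ) / (γ - 1) + (U 3 ^ 2 + U 4 ^ 2 + U 5 ^ 2) / 2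
    + (U 1 ^ 2 + U 2 ^ 2) / (2 * U 0) := rfl
  rw [Fin.sum_univ_six, e, mul_add, mul_add] at key
  clear_value g C K b
  linarith
end

section
/- Let γ>1, let U_l ≠ U_r be states with v_l, v_r > 0, and let 0 < a < 1. Suppose W : [0,1) → (0,∞)×ℝ⁵ is a continuous curve with W(0) = U_l whose first component v(s) tends to 0 as s → 1⁻. Then there exists s ∈ (0,1) such that η(W(s)|U_l) = a·η(W(s)|U_r). (That is, any continuous curve from U_l along which the specific volume tends to 0 must intersect the surface Σ_a = {U : η(U|U_l) = a·η(U|U_r)}.) -/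
open Real in
lemma p_pos (γ v w : ℝ) (hγ : 1 < γ) (hv : 0 < v) (hw : 0 < w) (h : v ≠ w) :
    0 < v ^ (1 - γ) / (γ - 1) - w ^ (1 - γ) / (γ - 1) + w ^ (-γ) * (v - w) := by
  have hr : 0 < w / v := by positivity
  have hb := one_add_mul_self_lt_rpow_one_add (s := w / v - 1) (by linarith)
    (by rw [Ne, sub_eq_zero, div_eq_one_iff_eq hv.ne']; exact fun e => h e.symm) hγ
  rw [add_sub_cancel, div_rpow hw.le hv.le] at hb
  have h1 : v ^ (1 - γ) = v / v ^ γ := by rw [rpow_sub hv, rpow_one]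
  have h2 : w ^ (1 - γ) = w / w ^ γ := by rw [rpow_sub hw, rpow_one]
  rw [h1, h2, rpow_neg hw.le]
  have p1 : 0 < v ^ γ := rpow_pos_of_pos hv γ
  have p2 : 0 < w ^ γ := rpow_pos_of_pos hw γ
  generalize v ^ γ = A at *
  generalize w ^ γ = B at *
  have hg : 0 < γ - 1 := by linarith
  have e : v / A / (γ - 1) - w / B / (γ - 1) + B⁻¹ * (v - w)
      = (B / A - (1 + γ * (w / v - 1))) * (v / (B * (γ - 1))) := by
    field_simp
    ring
  rw [e]
  exact mul_pos (by linarith) (by positivity)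

lemma p_nonneg (γ v w : ℝ) (hγ : 1 < γ) (hv : 0 < v) (hw : 0 < w) :
    0 ≤ v ^ (1 - γ) / (γ - 1) - w ^ (1 - γ) / (γ - 1) + w ^ (-γ) * (v - w) := by
  by_cases h : v = w
  · subst h; simp
  · exact (p_pos γ v w hγ hv hw h).le

lemma rel_eq (γ : ℝ) (U V : Fin 6 → ℝ) (hU : 0 < U 0) (hV : 0 < V 0) :
    mhdRelEntropy γ U V =
      ((U 0) ^ (1 - γ) / (γ - 1) - (V 0) ^ (1 - γ) / (γ - 1) + (V 0) ^ (-γ) * (U 0 - V 0))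
      + ((U 3 - V 3) ^ 2 + (U 4 - V 4) ^ 2 + (U 5 - V 5) ^ 2) / 2
      + U 0 / 2 * ((U 1 / U 0 - V 1 / V 0) ^ 2 + (U 2 / U 0 - V 2 / V 0) ^ 2) := by
  have h1 := hU.ne'
  have h2 := hV.ne'
  simp only [mhdRelEntropy, mhdEntropy, mhdEntropyGrad, Fin.sum_univ_six]
  simp
  generalize (U 0) ^ (1 - γ) / (γ - 1) = A
  generalize (V 0) ^ (1 - γ) / (γ - 1) = B
  generalize (V 0) ^ (-γ) = C
  field_simp
  ring

lemma rel_pos (γ : ℝ) (hγ : 1 < γ) (U V : Fin 6 → ℝ) (hU : 0 < U 0) (hV : 0 < V 0)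
    (hne : U ≠ V) : 0 < mhdRelEntropy γ U V := by
  rw [rel_eq γ U V hU hV]
  have hp := p_nonneg γ (U 0) (V 0) hγ hU hV
  have hq : 0 ≤ U 0 / 2 * ((U 1 / U 0 - V 1 / V 0) ^ 2 + (U 2 / U 0 - V 2 / V 0) ^ 2) := by
    positivity
  have hu : 0 ≤ ((U 3 - V 3) ^ 2 + (U 4 - V 4) ^ 2 + (U 5 - V 5) ^ 2) / 2 := by positivity
  by_cases h0 : U 0 = V 0
  swap
  · have := p_pos γ (U 0) (V 0) hγ hU hV h0
    linarith
  by_contra hcon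
  have hq0 : U 0 / 2 * ((U 1 / U 0 - V 1 / V 0) ^ 2 + (U 2 / U 0 - V 2 / V 0) ^ 2) = 0 := by
    linarith
  have hu0 : ((U 3 - V 3) ^ 2 + (U 4 - V 4) ^ 2 + (U 5 - V 5) ^ 2) = 0 := by linarith
  have hq1 : ((U 1 / U 0 - V 1 / V 0) ^ 2 + (U 2 / U 0 - V 2 / V 0) ^ 2) = 0 := by
    rcases mul_eq_zero.1 hq0 with h | h
    · linarith
    · exact h
  have key : ∀ x : ℝ, x ^ 2 ≤ 0 → x = 0 := fun x hx => by nlinarith [pow_eq_zero_iff (two_ne_zero) |>.1 (le_antisymm hx (sq_nonneg x))]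
  have e3 := key (U 3 - V 3) (by nlinarith [sq_nonneg (U 4 - V 4), sq_nonneg (U 5 - V 5)])
  have e4 := key (U 4 - V 4) (by nlinarith [sq_nonneg (U 3 - V 3), sq_nonneg (U 5 - V 5)])
  have e5 := key (U 5 - V 5) (by nlinarith [sq_nonneg (U 4 - V 4), sq_nonneg (U 3 - V 3)])
  have e1 := key _ (by nlinarith [sq_nonneg (U 2 / U 0 - V 2 / V 0)] : (U 1 / U 0 - V 1 / V 0) ^ 2 ≤ 0)
  have e2 := key _ (by nlinarith [sq_nonneg (U 1 / U 0 - V 1 / V 0)] : (U 2 / U 0 - V 2 / V 0) ^ 2 ≤ 0)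
  rw [h0] at e1 e2
  have hv := hV.ne'
  field_simp at e1 e2
  apply hne
  funext i
  fin_cases i <;> simp <;> linarith

lemma rel_self (γ : ℝ) (U : Fin 6 → ℝ) : mhdRelEntropy γ U U = 0 := by
  simp [mhdRelEntropy]

lemma quad_bd (c b x v : ℝ) (hc : 0 < c) (hv : 0 < v) (hv1 : v ≤ 1) :
    -(b ^ 2 / (2 * c)) ≤ c * (x ^ 2 / (2 * v)) - b * x := by
  have h1 : c * (x ^ 2 / 2) ≤ c * (x ^ 2 / (2 * v)) := by
    gcongr
    linarith
  have h2 : c * (x ^ 2 / 2) - b * x + b ^ 2 / (2 * c) = (c * x - b) ^ 2 / (2 * c) := by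
    field_simp
    ring
  have h3 : 0 ≤ (c * x - b) ^ 2 / (2 * c) := by positivity
  linarith

lemma lower (γ a : ℝ) (ha1 : a < 1) (Ul Ur : Fin 6 → ℝ) :
    ∃ C : ℝ, ∀ U : Fin 6 → ℝ, 0 < U 0 → U 0 ≤ 1 →
      (1 - a) * ((U 0) ^ (1 - γ) / (γ - 1)) - C
        ≤ mhdRelEntropy γ U Ul - a * mhdRelEntropy γ U Ur := by
  obtain ⟨g, hg⟩ : ∃ g : Fin 6 → ℝ, ∀ i, g i = mhdEntropyGrad γ Ul i - a * mhdEntropyGrad γ Ur i :=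
    ⟨_, fun _ => rfl⟩
  obtain ⟨K, hK⟩ : ∃ K : ℝ, K = mhdRelEntropy γ 0 Ul - a * mhdRelEntropy γ 0 Ur
      - (1 - a) * mhdEntropy γ 0 := ⟨_, rfl⟩
  have hF : ∀ U, mhdRelEntropy γ U Ul - a * mhdRelEntropy γ U Ur
      = (1 - a) * mhdEntropy γ U - ∑ i, g i * U i + K := by
    intro U
    rw [hK]
    simp only [mhdRelEntropy, Fin.sum_univ_six, hg, Pi.zero_apply]
    ring
  have hc : 0 < 1 - a := by linarith
  refine ⟨-K + |g 0| + g 1 ^ 2 / (2 * (1 - a)) + g 2 ^ 2 / (2 * (1 - a)) + g 3 ^ 2 / (2 * (1 - a))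
    + g 4 ^ 2 / (2 * (1 - a)) + g 5 ^ 2 / (2 * (1 - a)), fun U h0 h1 => ?_⟩
  rw [hF, Fin.sum_univ_six, mhdEntropy]
  have b1 := quad_bd (1 - a) (g 1) (U 1) (U 0) hc h0 h1
  have b2 := quad_bd (1 - a) (g 2) (U 2) (U 0) hc h0 h1
  have b3 := quad_bd (1 - a) (g 3) (U 3) 1 hc one_pos le_rfl
  have b4 := quad_bd (1 - a) (g 4) (U 4) 1 hc one_pos le_rfl
  have b5 := quad_bd (1 - a) (g 5) (U 5) 1 hc one_pos le_rfl
  have b0 : g 0 * U 0 ≤ |g 0| := by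
    nlinarith [le_abs_self (g 0), abs_nonneg (g 0)]
  rw [add_div (U 1 ^ 2)]
  simp only [mul_one] at b3 b4 b5
  linarith

/-- For `γ > 1`, states `U_l ≠ U_r` with `v_l, v_r > 0`, and `0 < a < 1`: any
continuous curve `W : [0,1) → (0,∞)×ℝ⁵` with `W(0) = U_l` whose specific volume tends to `0`
as `s → 1⁻` must intersect the surface `Σ_a = {U : η(U|U_l) = a·η(U|U_r)}` at some
`s ∈ (0,1)`. -/
theorem mhd_curve_meets_sigma_a
    (γ a : ℝ) (hγ : 1 < γ) (ha0 : 0 < a) (ha1 : a < 1)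
    (Ul Ur : Fin 6 → ℝ) (hvl : 0 < Ul 0) (hvr : 0 < Ur 0) (hne : Ul ≠ Ur)
    (W : ℝ → Fin 6 → ℝ)
    (hW0 : W 0 = Ul)
    (hWpos : ∀ s ∈ Set.Ico (0 : ℝ) 1, 0 < W s 0)
    (hWcont : ContinuousOn W (Set.Ico (0 : ℝ) 1))
    (hWlim : Filter.Tendsto (fun s => W s 0) (nhdsWithin 1 (Set.Iio 1)) (nhds 0)) :
    ∃ s ∈ Set.Ioo (0 : ℝ) 1,
      mhdRelEntropy γ (W s) Ul = a * mhdRelEntropy γ (W s) Ur := by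
  have hpos := rel_pos γ hγ Ul Ur hvl hvr hne
  obtain ⟨C, hC⟩ := lower γ a ha1 Ul Ur
  have hev : ∀ᶠ s in nhdsWithin (1:ℝ) (Set.Iio 1), s ∈ Set.Ioo (0:ℝ) 1 :=
    Ioo_mem_nhdsLT one_pos
  have hlim0 : Filter.Tendsto (fun s => W s 0) (nhdsWithin 1 (Set.Iio 1))
      (nhdsWithin 0 (Set.Ioi 0)) := by
    refine tendsto_nhdsWithin_iff.2 ⟨hWlim, ?_⟩
    filter_upwards [hev] with s hs
    exact hWpos s ⟨hs.1.le, hs.2⟩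
  have hblow : Filter.Tendsto (fun s => (W s 0) ^ (1 - γ)) (nhdsWithin 1 (Set.Iio 1))
      Filter.atTop :=
    (tendsto_rpow_neg_nhdsGT_zero (by linarith : 1 - γ < 0)).comp hlim0
  have hle1 : ∀ᶠ s in nhdsWithin (1:ℝ) (Set.Iio 1), W s 0 ≤ 1 :=
    hWlim.eventually_le_const one_pos
  have hbig := hblow.eventually_gt_atTop (C * (γ - 1) / (1 - a))
  obtain ⟨s1, ⟨hs1, hsl⟩, hsb⟩ := ((hev.and hle1).and hbig).exists
  have hFs : 0 < mhdRelEntropy γ (W s1) Ul - a * mhdRelEntropy γ (W s1) Ur := by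
    refine lt_of_lt_of_le ?_ (hC (W s1) (hWpos s1 ⟨hs1.1.le, hs1.2⟩) hsl)
    have h1 : 0 < 1 - a := by linarith
    have h2 : 0 < γ - 1 := by linarith
    rw [div_lt_iff₀ h1] at hsb
    rw [sub_pos, ← mul_div_assoc, lt_div_iff₀ h2]
    linarith
  have hcont : ContinuousOn (fun s => mhdRelEntropy γ (W s) Ul - a * mhdRelEntropy γ (W s) Ur)
      (Set.Icc 0 s1) := by
    have hsub : Set.Icc 0 s1 ⊆ Set.Ico (0:ℝ) 1 := fun s hs => ⟨hs.1, hs.2.trans_lt hs1.2⟩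
    have hW := hWcont.mono hsub
    have hc : ∀ i, ContinuousOn (fun s => W s i) (Set.Icc 0 s1) := fun i =>
      (continuous_apply i).comp_continuousOn hW
    have hne0 : ∀ s ∈ Set.Icc 0 s1, W s 0 ≠ 0 := fun s hs => (hWpos s (hsub hs)).ne'
    have hr : ContinuousOn (fun s => (W s 0) ^ (1 - γ)) (Set.Icc 0 s1) :=
      (hc 0).rpow_const fun s hs => Or.inl (hne0 s hs)
    have hE : ContinuousOn (fun s => mhdEntropy γ (W s)) (Set.Icc 0 s1) := by
      unfold mhdEntropy
      refine ((hr.div_const _).add ?_).add (ContinuousOn.div ?_ ?_ ?_)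
      · have := hc 3; have := hc 4; have := hc 5; fun_prop
      · have := hc 1; have := hc 2; fun_prop
      · have := hc 0; fun_prop
      · intro s hs; exact mul_ne_zero two_ne_zero (hne0 s hs)
    unfold mhdRelEntropy
    fun_prop
  have hivt := intermediate_value_Ioo hs1.1.le hcont
  have hF0 : mhdRelEntropy γ (W 0) Ul - a * mhdRelEntropy γ (W 0) Ur < 0 := by
    rw [hW0, rel_self]
    nlinarith
  obtain ⟨s, hs, hs0⟩ := hivt ⟨hF0, hFs⟩
  exact ⟨s, ⟨hs.1, hs.2.trans hs1.2⟩, sub_eq_zero.1 hs0⟩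
end

section
/- Let γ>1, β∈ℝ, v_l, v_r > 0, σ∈ℝ, and suppose states U_l, U_r satisfy the six Rankine–Hugoniot conditions with speed σ. Then, writing [f] := f_r − f_l, the entropy production satisfies the identity [G] − σ[η] = −σ·(v_r − v_l)·( ∫₀¹ ( s·p(v_r) + (1−s)·p(v_l) − p(s·v_r + (1−s)·v_l) ) ds + ¼·Σ_{i=2,3} ( q_{i,r}/v_r − q_{i,l}/v_l )² ), where p(v) = v^{-γ}. -/
theorem aux_integral (γ vl vr : ℝ) (hγ : 1 < γ) (hvl : 0 < vl) (hvr : 0 < vr) :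
    (vr - vl) * (∫ s in (0 : ℝ)..1,
      (s * vr ^ (-γ) + (1 - s) * vl ^ (-γ) - (s * vr + (1 - s) * vl) ^ (-γ))) =
    (vr - vl) * (vr ^ (-γ) + vl ^ (-γ)) / 2 + (vr ^ (1 - γ) - vl ^ (1 - γ)) / (γ - 1) := by
  have hg : γ - 1 ≠ 0 := by linarith
  have hg2 : 1 - γ ≠ 0 := by linarith
  have hpos : ∀ s ∈ Set.uIcc (0 : ℝ) 1, 0 < s * vr + (1 - s) * vl := by
    intro s hs
    rw [Set.uIcc_of_le zero_le_one] at hs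
    obtain ⟨h0, h1⟩ := hs
    rcases eq_or_lt_of_le h0 with h | h
    · subst h; simpa using hvl
    · have := mul_pos h hvr
      have := mul_nonneg (sub_nonneg.2 h1) hvl.le
      linarith
  rw [← intervalIntegral.integral_const_mul]
  rw [intervalIntegral.integral_eq_sub_of_hasDerivAt
    (f := fun s => (vr - vl) * (s ^ 2 / 2 * vr ^ (-γ) + (s - s ^ 2 / 2) * vl ^ (-γ))
      + (s * vr + (1 - s) * vl) ^ (1 - γ) / (γ - 1))]
  · simp
    ring
  · intro s hs
    have hl : HasDerivAt (fun s : ℝ => s * vr + (1 - s) * vl) (vr - vl) s := by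
      have := ((hasDerivAt_id s).mul_const vr).add (((hasDerivAt_id s).const_sub 1).mul_const vl)
      refine HasDerivAt.congr_deriv this ?_
      ring
    have h2 : HasDerivAt (fun s : ℝ => s ^ 2 / 2) s s := by
      have := (hasDerivAt_pow 2 s).div_const 2
      refine HasDerivAt.congr_deriv this ?_
      simp
    have h3 := (hl.rpow_const (p := 1 - γ) (Or.inl (hpos s hs).ne')).div_const (γ - 1)
    have h4 := (((h2.mul_const (vr ^ (-γ))).add
      (((hasDerivAt_id s).sub h2).mul_const (vl ^ (-γ)))).const_mul (vr - vl)).add h3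
    refine HasDerivAt.congr_deriv h4 ?_
    rw [show 1 - γ - 1 = -γ by ring]
    field_simp
    ring
  · apply ContinuousOn.intervalIntegrable
    refine continuousOn_const.mul (ContinuousOn.sub (by fun_prop) ?_)
    exact ContinuousOn.rpow_const (by fun_prop) (fun s hs => Or.inl (hpos s hs).ne')

/-- For states `U_l, U_r` satisfying the Rankine–Hugoniot conditions with speed
`σ`, the entropy production satisfies the identity
`[G] − σ[η] = −σ (v_r − v_l) ( ∫₀¹ (s p(v_r) + (1−s) p(v_l) − p(s v_r + (1−s) v_l)) ds
  + ¼ Σ_{i=2,3} (q_{i,r}/v_r − q_{i,l}/v_l)² )`, where `p(v) = v^(−γ)`,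
`η(U) = v^(1−γ)/(γ−1) + ½(u₁²+u₂²+u₃²) + (q₂²+q₃²)/(2v)` and
`G(U) = (p(v) + (q₂²+q₃²)/(2v²))u₁ − (β/v)(q₂u₂+q₃u₃)`. -/
theorem mhd_entropy_production_identity
    (γ β σ vl vr q2l q3l u1l u2l u3l q2r q3r u1r u2r u3r : ℝ)
    (hγ : 1 < γ) (hvl : 0 < vl) (hvr : 0 < vr)
    (rh1 : -(u1r - u1l) = σ * (vr - vl))
    (rh2 : -(β * (u2r - u2l)) = σ * (q2r - q2l))
    (rh3 : -(β * (u3r - u3l)) = σ * (q3r - q3l))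
    (rh4 : (vr ^ (-γ) - vl ^ (-γ)) +
      ((q2r ^ 2 + q3r ^ 2) / (2 * vr ^ 2) - (q2l ^ 2 + q3l ^ 2) / (2 * vl ^ 2)) =
        σ * (u1r - u1l))
    (rh5 : -(β * (q2r / vr - q2l / vl)) = σ * (u2r - u2l))
    (rh6 : -(β * (q3r / vr - q3l / vl)) = σ * (u3r - u3l))
    (etal etar Gl Gr : ℝ)
    (hetal : etal = vl ^ (1 - γ) / (γ - 1) + (u1l ^ 2 + u2l ^ 2 + u3l ^ 2) / 2 +
      (q2l ^ 2 + q3l ^ 2) / (2 * vl))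
    (hetar : etar = vr ^ (1 - γ) / (γ - 1) + (u1r ^ 2 + u2r ^ 2 + u3r ^ 2) / 2 +
      (q2r ^ 2 + q3r ^ 2) / (2 * vr))
    (hGl : Gl = (vl ^ (-γ) + (q2l ^ 2 + q3l ^ 2) / (2 * vl ^ 2)) * u1l -
      (β / vl) * (q2l * u2l + q3l * u3l))
    (hGr : Gr = (vr ^ (-γ) + (q2r ^ 2 + q3r ^ 2) / (2 * vr ^ 2)) * u1r -
      (β / vr) * (q2r * u2r + q3r * u3r)) :
    (Gr - Gl) - σ * (etar - etal) =
      -σ * (vr - vl) *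
        ((∫ s in (0 : ℝ)..1,
            (s * vr ^ (-γ) + (1 - s) * vl ^ (-γ) - (s * vr + (1 - s) * vl) ^ (-γ))) +
          (1 / 4) * ((q2r / vr - q2l / vl) ^ 2 + (q3r / vr - q3l / vl) ^ 2)) := by
  have hI := aux_integral γ vl vr hγ hvl hvr
  subst hetal hetar hGl hGr
  generalize (∫ s in (0 : ℝ)..1,
      (s * vr ^ (-γ) + (1 - s) * vl ^ (-γ) - (s * vr + (1 - s) * vl) ^ (-γ))) = I at *
  generalize vr ^ (-γ) = pr at *
  generalize vl ^ (-γ) = pl at *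
  generalize vr ^ (1 - γ) = er at *
  generalize vl ^ (1 - γ) = el at *
  obtain ⟨a2, rfl⟩ : ∃ a, q2r = a * vr := ⟨q2r / vr, by field_simp⟩
  obtain ⟨a3, rfl⟩ : ∃ a, q3r = a * vr := ⟨q3r / vr, by field_simp⟩
  obtain ⟨b2, rfl⟩ : ∃ a, q2l = a * vl := ⟨q2l / vl, by field_simp⟩
  obtain ⟨b3, rfl⟩ : ∃ a, q3l = a * vl := ⟨q3l / vl, by field_simp⟩
  have e (a b v : ℝ) (hv : 0 < v) : ((a * v) ^ 2 + (b * v) ^ 2) / (2 * v ^ 2) = (a ^ 2 + b ^ 2) / 2 := by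
    field_simp
  have e' (a b v : ℝ) (hv : 0 < v) : ((a * v) ^ 2 + (b * v) ^ 2) / (2 * v) = v * (a ^ 2 + b ^ 2) / 2 := by
    field_simp
  have e'' (a b c d v : ℝ) (hv : 0 < v) :
      β / v * (a * v * c + b * v * d) = β * (a * c + b * d) := by
    field_simp
  simp only [e _ _ _ hvl, e _ _ _ hvr, e' _ _ _ hvl, e' _ _ _ hvr, e'' _ _ _ _ _ hvl,
    e'' _ _ _ _ _ hvr, mul_div_cancel_right₀ _ hvl.ne', mul_div_cancel_right₀ _ hvr.ne'] at *
  linear_combination (-(pr + pl + (a2 ^ 2 + a3 ^ 2) / 2 + (b2 ^ 2 + b3 ^ 2) / 2) / 2) * rh1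
    + (u1r + u1l) / 2 * rh4 + (a2 + b2) / 2 * rh2 + (a3 + b3) / 2 * rh3
    + (u2r + u2l) / 2 * rh5 + (u3r + u3l) / 2 * rh6 + σ * hI
end

section
/- Let γ>1, β∈ℝ, v_l, v_r > 0, σ∈ℝ, and suppose states U_l, U_r satisfy the six Rankine–Hugoniot conditions with speed σ together with the entropy inequality [G] − σ[η] ≤ 0. Then σ·(v_r − v_l) ≥ 0. -/
lemma aux_tangent (γ a b : ℝ) (hγ : 1 < γ) (ha : 0 < a) (hab : a < b) :
    0 < a ^ (-γ) - b ^ (-γ) - γ * b ^ (-γ - 1) * (b - a) := by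
  have hb : 0 < b := ha.trans hab
  have h1 : a ^ (-γ) = b ^ (-γ) * (a / b) ^ (-γ) := by
    rw [← Real.mul_rpow hb.le (by positivity)]
    congr 1
    field_simp
  have ht : 0 < a / b := by positivity
  have ht1 : a / b < 1 := (div_lt_one hb).2 hab
  have h2 : b ^ (-γ - 1) * (b - a) = b ^ (-γ) * (1 - a / b) := by
    rw [Real.rpow_sub_one hb.ne']
    field_simp
  have h3 : Real.log (a / b) < a / b - 1 := Real.log_lt_sub_one_of_pos ht ht1.ne
  have h4 : (a / b) ^ (-γ) = Real.exp (Real.log (a / b) * (-γ)) := Real.rpow_def_of_pos ht _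
  have h5 := Real.add_one_le_exp (Real.log (a / b) * (-γ))
  have h6 : 0 < b ^ (-γ) := Real.rpow_pos_of_pos hb _
  have h7 : 0 < (a / b) ^ (-γ) - 1 - γ * (1 - a / b) := by
    rw [h4]; nlinarith
  have h8 := mul_pos h6 h7
  rw [mul_assoc, h2, h1]
  linarith

lemma aux_trap (γ a b : ℝ) (hγ : 1 < γ) (ha : 0 < a) (hab : a < b) :
    0 < (b ^ (1 - γ) - a ^ (1 - γ)) / (γ - 1) + (a ^ (-γ) + b ^ (-γ)) / 2 * (b - a) := by
  set h : ℝ → ℝ := fun x => (x ^ (1 - γ) - a ^ (1 - γ)) / (γ - 1)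
    + (a ^ (-γ) + x ^ (-γ)) / 2 * (x - a) with hh
  have hd : ∀ x, 0 < x → HasDerivAt h
      ((a ^ (-γ) - x ^ (-γ) - γ * x ^ (-γ - 1) * (x - a)) / 2) x := by
    intro x hx
    have d1 := Real.hasDerivAt_rpow_const (x := x) (p := 1 - γ) (Or.inl hx.ne')
    have d2 := Real.hasDerivAt_rpow_const (x := x) (p := -γ) (Or.inl hx.ne')
    have d3 := ((d1.sub_const (a ^ (1 - γ))).div_const (γ - 1)).add
      (((d2.const_add (a ^ (-γ))).div_const 2).mul ((hasDerivAt_id x).sub_const a))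
    refine d3.congr_deriv ?_
    have e : (1 - γ - 1) = -γ := by ring
    have : γ - 1 ≠ 0 := by linarith
    rw [e]
    simp only [id]
    field_simp
    ring
  have hm : StrictMonoOn h (Set.Ici a) := by
    apply strictMonoOn_of_deriv_pos (convex_Ici a)
    · intro x hx
      exact (hd x (lt_of_lt_of_le ha hx)).continuousAt.continuousWithinAt
    · intro x hx
      rw [interior_Ici] at hx
      rw [(hd x (lt_trans ha hx)).deriv]
      have := aux_tangent γ a x hγ ha hx
      linarith
  have := hm (Set.self_mem_Ici) (Set.mem_Ici.2 hab.le) hab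
  have h0 : h a = 0 := by simp [hh]
  rw [h0] at this
  exact this

/-- For states `U_l, U_r` satisfying the Rankine–Hugoniot conditions with speed
`σ` together with the entropy inequality `[G] − σ[η] ≤ 0`, one has `σ (v_r − v_l) ≥ 0`. -/
theorem mhd_entropy_inequality_volume_sign
    (γ β σ vl vr q2l q3l u1l u2l u3l q2r q3r u1r u2r u3r : ℝ)
    (hγ : 1 < γ) (hvl : 0 < vl) (hvr : 0 < vr)
    (rh1 : -(u1r - u1l) = σ * (vr - vl))
    (rh2 : -(β * (u2r - u2l)) = σ * (q2r - q2l))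
    (rh3 : -(β * (u3r - u3l)) = σ * (q3r - q3l))
    (rh4 : (vr ^ (-γ) - vl ^ (-γ)) +
      ((q2r ^ 2 + q3r ^ 2) / (2 * vr ^ 2) - (q2l ^ 2 + q3l ^ 2) / (2 * vl ^ 2)) =
        σ * (u1r - u1l))
    (rh5 : -(β * (q2r / vr - q2l / vl)) = σ * (u2r - u2l))
    (rh6 : -(β * (q3r / vr - q3l / vl)) = σ * (u3r - u3l))
    (etal etar Gl Gr : ℝ)
    (hetal : etal = vl ^ (1 - γ) / (γ - 1) + (u1l ^ 2 + u2l ^ 2 + u3l ^ 2) / 2 +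
      (q2l ^ 2 + q3l ^ 2) / (2 * vl))
    (hetar : etar = vr ^ (1 - γ) / (γ - 1) + (u1r ^ 2 + u2r ^ 2 + u3r ^ 2) / 2 +
      (q2r ^ 2 + q3r ^ 2) / (2 * vr))
    (hGl : Gl = (vl ^ (-γ) + (q2l ^ 2 + q3l ^ 2) / (2 * vl ^ 2)) * u1l -
      (β / vl) * (q2l * u2l + q3l * u3l))
    (hGr : Gr = (vr ^ (-γ) + (q2r ^ 2 + q3r ^ 2) / (2 * vr ^ 2)) * u1r -
      (β / vr) * (q2r * u2r + q3r * u3r))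
    (hent : (Gr - Gl) - σ * (etar - etal) ≤ 0) :
    0 ≤ σ * (vr - vl) := by
  have key : (Gr - Gl) - σ * (etar - etal) = -σ * (((vr ^ (1 - γ) - vl ^ (1 - γ)) / (γ - 1)
      + (vl ^ (-γ) + vr ^ (-γ)) / 2 * (vr - vl))
      + (vr - vl) * ((q2r / vr - q2l / vl) ^ 2 + (q3r / vr - q3l / vl) ^ 2) / 4) := by
    obtain ⟨b2l, rfl⟩ : ∃ b, q2l = vl * b := ⟨q2l / vl, by field_simp⟩
    obtain ⟨b3l, rfl⟩ : ∃ b, q3l = vl * b := ⟨q3l / vl, by field_simp⟩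
    obtain ⟨b2r, rfl⟩ : ∃ b, q2r = vr * b := ⟨q2r / vr, by field_simp⟩
    obtain ⟨b3r, rfl⟩ : ∃ b, q3r = vr * b := ⟨q3r / vr, by field_simp⟩
    have s1 : ∀ v x : ℝ, 0 < v → v * x / v = x := fun v x hv => by field_simp
    have s2 : ∀ v x y : ℝ, 0 < v →
        ((v * x) ^ 2 + (v * y) ^ 2) / (2 * v ^ 2) = (x ^ 2 + y ^ 2) / 2 :=
      fun v x y hv => by field_simp
    have s3 : ∀ v x y : ℝ, 0 < v →
        ((v * x) ^ 2 + (v * y) ^ 2) / (2 * v) = v * (x ^ 2 + y ^ 2) / 2 :=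
      fun v x y hv => by field_simp
    have s4 : ∀ v x y z w : ℝ, 0 < v →
        (β / v) * (v * x * z + v * y * w) = β * (x * z + y * w) :=
      fun v x y z w hv => by field_simp
    simp only [s1 _ _ hvl, s1 _ _ hvr, s2 _ _ _ hvl, s2 _ _ _ hvr, s3 _ _ _ hvl, s3 _ _ _ hvr,
      s4 _ _ _ _ _ hvl, s4 _ _ _ _ _ hvr] at *
    subst hetal hetar hGl hGr
    linear_combination
      (u1l + u1r) / 2 * rh4 + (u2l + u2r) / 2 * rh5 + (u3l + u3r) / 2 * rh6
      - (vl ^ (-γ) + vr ^ (-γ) + (b2l ^ 2 + b3l ^ 2) / 2 + (b2r ^ 2 + b3r ^ 2) / 2) / 2 * rh1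
      + (b2l + b2r) / 2 * rh2 + (b3l + b3r) / 2 * rh3
  rw [key] at hent
  have hB : 0 ≤ (q2r / vr - q2l / vl) ^ 2 + (q3r / vr - q3l / vl) ^ 2 := by positivity
  generalize (q2r / vr - q2l / vl) ^ 2 + (q3r / vr - q3l / vl) ^ 2 = B at *
  rcases lt_trichotomy vl vr with h | h | h
  · have t := aux_trap γ vl vr hγ hvl h
    have hp := mul_nonneg (sub_pos.2 h).le hB
    have : 0 ≤ σ := by
      by_contra! hs
      exact absurd hent (not_le.2 (mul_pos (neg_pos.2 hs) (by linarith)))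
    exact mul_nonneg this (sub_pos.2 h).le
  · simp [h]
  · have t := aux_trap γ vr vl hγ hvr h
    have hp := mul_nonneg (sub_pos.2 h).le hB
    have e : (vr ^ (1 - γ) - vl ^ (1 - γ)) / (γ - 1) + (vl ^ (-γ) + vr ^ (-γ)) / 2 * (vr - vl)
      = -((vl ^ (1 - γ) - vr ^ (1 - γ)) / (γ - 1) + (vr ^ (-γ) + vl ^ (-γ)) / 2 * (vl - vr)) := by
      ring
    rw [e] at hent
    have : σ ≤ 0 := by
      by_contra! hs
      exact absurd hent (not_le.2 (mul_pos_of_neg_of_neg (neg_neg_of_pos hs) (by linarith)))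
    exact mul_nonneg_of_nonpos_of_nonpos this (sub_neg.2 h).le
end

section
/- Let γ>1, β ≠ 0, and let W : I → (0,∞)×ℝ⁵ (I an interval containing 0), W(t) = (v(t),B₂(t),B₃(t),u₁(t),u₂(t),u₃(t)), be a differentiable solution of W′(t) = r₆(W(t)), where r₆(W) = (−(v/α₊)(α₊−β²/v), B₂, B₃, (v/√α₊)(α₊−β²/v), −βB₂/√α₊, −βB₃/√α₊). Then B_i(t) = B_i(0)·e^t for i = 2,3 (so in particular the sign of each B_i is preserved along the curve), and if (B₂(0),B₃(0)) ≠ (0,0) then v(t) is strictly decreasing on I. The same two conclusions hold for differentiable solutions of W′(t) = −r₁(W(t)), where r₁(W) = ((v/α₊)(α₊−β²/v), −B₂, −B₃, (v/√α₊)(α₊−β²/v), −βB₂/√α₊, −βB₃/√α₊). -/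
lemma mhd_aux_exp (I : Set ℝ) (hI : I.OrdConnected) (h0I : (0 : ℝ) ∈ I) (B : ℝ → ℝ)
    (hB : ∀ t ∈ I, HasDerivAt B (B t) t) : ∀ t ∈ I, B t = B 0 * Real.exp t := by
  intro t ht
  have hd : ∀ x ∈ I, HasDerivWithinAt (fun s => B s * Real.exp (-s)) 0 I x := by
    intro x hx
    have h := (hB x hx).mul ((hasDerivAt_neg x).exp)
    have h2 : HasDerivAt (fun s => B s * Real.exp (-s)) 0 x := by
      refine HasDerivAt.congr_deriv h ?_
      ring
    exact h2.hasDerivWithinAt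
  have hc : Convex ℝ I := hI.convex
  have h := hc.norm_image_sub_le_of_norm_hasDerivWithin_le (C := 0) hd (by simp) h0I ht
  simp only [zero_mul, norm_le_zero_iff, sub_eq_zero, neg_zero, Real.exp_zero, mul_one] at h
  rw [← h, mul_assoc, ← Real.exp_add]
  simp

lemma mhd_aux_alpha (b s c : ℝ) (hb : 0 < b) (hs : 0 < s) :
    b < (1 / 2) * (s + b + c + Real.sqrt ((s + b + c) ^ 2 - 4 * b * c)) := by
  have : b - c - s < Real.sqrt ((s + b + c) ^ 2 - 4 * b * c) := by
    apply Real.lt_sqrt_of_sq_lt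
    nlinarith [mul_pos hb hs]
  linarith

/-- Along any differentiable solution on an interval `I ∋ 0` of the ODE
`W′ = r₆(W)`, with
`r₆(W) = (−(v/α₊)(α₊−β²/v), B₂, B₃, (v/√α₊)(α₊−β²/v), −βB₂/√α₊, −βB₃/√α₊)`, one has
`B_i(t) = B_i(0) eᵗ` for `i = 2,3` (so the sign of each `B_i` is preserved), and if
`(B₂(0),B₃(0)) ≠ (0,0)` then `v` is strictly decreasing on `I`. The same two conclusions hold
for solutions of `W′ = −r₁(W)`; the sign `ε = 1` corresponds to `r₆` and `ε = −1` to `−r₁`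
(the two fields only differ in the `u₁` component among the quantities involved). -/
theorem mhd_rarefaction_curves_B_and_v
    (γ β : ℝ) (hγ : 1 < γ) (hβ : β ≠ 0)
    (αp : ℝ → ℝ → ℝ → ℝ)
    (hαp : ∀ v B₂ B₃ : ℝ, αp v B₂ B₃ =
      (1 / 2) * ((B₂ ^ 2 + B₃ ^ 2 + β ^ 2) / v + γ * v ^ (-γ - 1) +
        Real.sqrt (((B₂ ^ 2 + B₃ ^ 2 + β ^ 2) / v + γ * v ^ (-γ - 1)) ^ 2 -
          4 * β ^ 2 * (γ * v ^ (-γ - 1)) / v)))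
    (I : Set ℝ) (hI : I.OrdConnected) (h0I : (0 : ℝ) ∈ I)
    (v B₂ B₃ u₁ u₂ u₃ : ℝ → ℝ)
    (hvpos : ∀ t ∈ I, 0 < v t)
    (ε : ℝ) (hε : ε = 1 ∨ ε = -1)
    (hv' : ∀ t ∈ I, HasDerivAt v
      (-(v t / αp (v t) (B₂ t) (B₃ t)) * (αp (v t) (B₂ t) (B₃ t) - β ^ 2 / v t)) t)
    (hB₂' : ∀ t ∈ I, HasDerivAt B₂ (B₂ t) t)
    (hB₃' : ∀ t ∈ I, HasDerivAt B₃ (B₃ t) t)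
    (hu₁' : ∀ t ∈ I, HasDerivAt u₁
      (ε * (v t / Real.sqrt (αp (v t) (B₂ t) (B₃ t))) *
        (αp (v t) (B₂ t) (B₃ t) - β ^ 2 / v t)) t)
    (hu₂' : ∀ t ∈ I, HasDerivAt u₂
      (-(β * B₂ t / Real.sqrt (αp (v t) (B₂ t) (B₃ t)))) t)
    (hu₃' : ∀ t ∈ I, HasDerivAt u₃
      (-(β * B₃ t / Real.sqrt (αp (v t) (B₂ t) (B₃ t)))) t) :
    (∀ t ∈ I, B₂ t = B₂ 0 * Real.exp t ∧ B₃ t = B₃ 0 * Real.exp t) ∧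
    ((B₂ 0, B₃ 0) ≠ (0, 0) → StrictAntiOn v I) := by
  have h2 := mhd_aux_exp I hI h0I B₂ hB₂'
  have h3 := mhd_aux_exp I hI h0I B₃ hB₃'
  refine ⟨fun t ht => ⟨h2 t ht, h3 t ht⟩, fun hne => ?_⟩
  apply strictAntiOn_of_deriv_neg hI.convex
  · exact fun t ht => (hv' t ht).continuousAt.continuousWithinAt
  · intro t ht'
    have ht : t ∈ I := interior_subset ht'
    rw [(hv' t ht).deriv]
    have hv := hvpos t ht
    have hs : 0 < B₂ t ^ 2 + B₃ t ^ 2 := by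
      rw [h2 t ht, h3 t ht]
      have he := Real.exp_pos t
      by_cases hz : B₂ 0 = 0
      · have hz3 : B₃ 0 ≠ 0 := fun h => hne (by rw [hz, h])
        positivity
      · positivity
    have hb : 0 < β ^ 2 / v t := by positivity
    have key : β ^ 2 / v t < αp (v t) (B₂ t) (B₃ t) := by
      have h := mhd_aux_alpha (β ^ 2 / v t) ((B₂ t ^ 2 + B₃ t ^ 2) / v t)
        (γ * v t ^ (-γ - 1)) hb (by positivity)
      rw [hαp]
      convert h using 6 <;> ring
    have hα := hb.trans key
    have := mul_pos (div_pos hv hα) (sub_pos.2 key)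
    linarith
end

section
/- For every γ>1, the function η(v,q₂,q₃,u₁,u₂,u₃) = v^{1-γ}/(γ-1) + ½(u₁²+u₂²+u₃²) + (q₂²+q₃²)/(2v) is strictly convex on the open convex set {(v,q₂,q₃,u₁,u₂,u₃) ∈ ℝ⁶ : v > 0}. -/
lemma aux_rpow (s : ℝ) (hs : s < 0) : StrictConvexOn ℝ (Set.Ioi 0) (fun x : ℝ => x ^ s) := by
  apply strictConvexOn_of_deriv2_pos' (convex_Ioi 0)
  · intro x hx
    exact (Real.continuousAt_rpow_const x s (Or.inl (ne_of_gt hx))).continuousWithinAt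
  · intro x hx
    have hx : 0 < x := hx
    have h1 : deriv (fun x : ℝ => x ^ s) =ᶠ[nhds x] fun y => s * y ^ (s - 1) := by
      filter_upwards [lt_mem_nhds hx] with y hy
      exact (Real.hasDerivAt_rpow_const (Or.inl hy.ne')).deriv
    have h2 : deriv^[2] (fun x : ℝ => x ^ s) x = s * ((s - 1) * x ^ (s - 1 - 1)) := by
      simp only [Function.iterate_succ, Function.iterate_zero, Function.comp, id]
      rw [h1.deriv_eq]
      exact ((Real.hasDerivAt_rpow_const (Or.inl hx.ne')).const_mul s).deriv
    rw [h2]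
    have := Real.rpow_pos_of_pos hx (s - 1 - 1)
    exact mul_pos_of_neg_of_neg hs (mul_neg_of_neg_of_pos (by linarith) this)

lemma aux_sq (a b p q : ℝ) (hab : a + b = 1) :
    a * p ^ 2 + b * q ^ 2 = (a * p + b * q) ^ 2 + a * b * (p - q) ^ 2 := by
  obtain rfl : b = 1 - a := by linarith
  ring

lemma aux_quot (a b v w p q : ℝ) (ha : 0 < a) (hb : 0 < b)
    (hv : 0 < v) (hw : 0 < w) :
    a * (p ^ 2 / (2 * v)) + b * (q ^ 2 / (2 * w)) = (a * p + b * q) ^ 2 / (2 * (a * v + b * w))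
      + a * b * (p * w - q * v) ^ 2 / (2 * v * w * (a * v + b * w)) := by
  have : 0 < a * v + b * w := by positivity
  field_simp
  ring

/-- For every `γ > 1`, the entropy
`η(v,q₂,q₃,u₁,u₂,u₃) = v^(1−γ)/(γ−1) + ½(u₁²+u₂²+u₃²) + (q₂²+q₃²)/(2v)` is strictly convex on
the open convex set `{U ∈ ℝ⁶ : v > 0}` (in conservative variables `U = (v,q₂,q₃,u₁,u₂,u₃)`). -/
theorem mhd_entropy_strictly_convex (γ : ℝ) (hγ : 1 < γ) :
    StrictConvexOn ℝ {U : Fin 6 → ℝ | 0 < U 0}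
      (fun U : Fin 6 → ℝ =>
        (U 0) ^ (1 - γ) / (γ - 1) + (U 3 ^ 2 + U 4 ^ 2 + U 5 ^ 2) / 2 +
          (U 1 ^ 2 + U 2 ^ 2) / (2 * U 0)) := by
  have hg : 0 < γ - 1 := by linarith
  have hr := aux_rpow (1 - γ) (by linarith)
  refine ⟨?_, ?_⟩
  · intro x hx y hy a b ha hb hab
    exact (convex_Ioi (0:ℝ)) (Set.mem_Ioi.2 hx) (Set.mem_Ioi.2 hy) ha hb hab
  · intro x hx y hy hxy a b ha hb hab
    have hx : 0 < x 0 := hx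
    have hy : 0 < y 0 := hy
    have hz : 0 < a * x 0 + b * y 0 := by positivity
    have hab' : 0 < a * b := mul_pos ha hb
    simp only [Pi.add_apply, Pi.smul_apply, smul_eq_mul]
    have s3 := aux_sq a b (x 3) (y 3) hab
    have s4 := aux_sq a b (x 4) (y 4) hab
    have s5 := aux_sq a b (x 5) (y 5) hab
    have t1 := aux_quot a b (x 0) (y 0) (x 1) (y 1) ha hb hx hy
    have t2 := aux_quot a b (x 0) (y 0) (x 2) (y 2) ha hb hx hy
    have n3 : 0 ≤ a * b * (x 3 - y 3) ^ 2 := by positivity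
    have n4 : 0 ≤ a * b * (x 4 - y 4) ^ 2 := by positivity
    have n5 : 0 ≤ a * b * (x 5 - y 5) ^ 2 := by positivity
    have n1 : 0 ≤ a * b * (x 1 * y 0 - y 1 * x 0) ^ 2 / (2 * x 0 * y 0 * (a * x 0 + b * y 0)) := by
      positivity
    have n2 : 0 ≤ a * b * (x 2 * y 0 - y 2 * x 0) ^ 2 / (2 * x 0 * y 0 * (a * x 0 + b * y 0)) := by
      positivity
    have hle : (a * x 0 + b * y 0) ^ (1 - γ) / (γ - 1) ≤
        a * (x 0 ^ (1 - γ) / (γ - 1)) + b * (y 0 ^ (1 - γ) / (γ - 1)) := by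
      have := hr.convexOn.2 (Set.mem_Ioi.2 hx) (Set.mem_Ioi.2 hy) ha.le hb.le hab
      simp only [smul_eq_mul] at this
      rw [← mul_div_assoc, ← mul_div_assoc, ← add_div]
      exact div_le_div_of_nonneg_right this hg.le
    simp only [add_div, mul_add] at *
    by_cases h0 : x 0 = y 0
    · have hne : ∃ i, x i ≠ y i := Function.ne_iff.1 hxy
      have key : x 1 ≠ y 1 ∨ x 2 ≠ y 2 ∨ x 3 ≠ y 3 ∨ x 4 ≠ y 4 ∨ x 5 ≠ y 5 := by
        obtain ⟨i, hi⟩ := hne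
        fin_cases i <;> simp_all
      rcases key with h | h | h | h | h
      · have : 0 < a * b * (x 1 * y 0 - y 1 * x 0) ^ 2 /
            (2 * x 0 * y 0 * (a * x 0 + b * y 0)) := by
          have : x 1 * y 0 - y 1 * x 0 ≠ 0 := by
            rw [h0, ← sub_mul]; exact mul_ne_zero (sub_ne_zero.2 h) hy.ne'
          positivity
        simp only [mul_add] at this
        linarith
      · have : 0 < a * b * (x 2 * y 0 - y 2 * x 0) ^ 2 /
            (2 * x 0 * y 0 * (a * x 0 + b * y 0)) := by
          have : x 2 * y 0 - y 2 * x 0 ≠ 0 := by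
            rw [h0, ← sub_mul]; exact mul_ne_zero (sub_ne_zero.2 h) hy.ne'
          positivity
        simp only [mul_add] at this
        linarith
      all_goals
        have h' := sub_ne_zero.2 h
        have := mul_pos hab' (pow_pos (abs_pos.2 h') 2)
        rw [sq_abs] at this
        linarith
    · have hlt : (a * x 0 + b * y 0) ^ (1 - γ) / (γ - 1) <
          a * (x 0 ^ (1 - γ) / (γ - 1)) + b * (y 0 ^ (1 - γ) / (γ - 1)) := by
        have := hr.2 (Set.mem_Ioi.2 hx) (Set.mem_Ioi.2 hy) h0 ha hb hab
        simp only [smul_eq_mul] at this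
        rw [← mul_div_assoc, ← mul_div_assoc, ← add_div]
        exact div_lt_div_of_pos_right this hg
      linarith
end
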